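/- Let A be the 3×3 generalized Cartan matrix with rows (2, −1, −3), (−3, 2, −1), (−2, −4, 2). Over F₃, the subalgebra of F₃[ω₁,ω₂,ω₃] consisting of polynomials fixed by both σ₁ and σ₂ equals the F₃-subalgebra generated by ω₃, ω₁(ω₁+ω₃), and ω₂(ω₁+2ω₂+ω₃)(ω₁+ω₂)(ω₁+ω₂+2ω₃)(2ω₁+ω₂+ω₃)(ω₂+ω₃). -/

import Mathlib

open MvPolynomial

/-- The Cartan matrix with rows `(2,−1,−3)`, `(−3,2,−1)`, `(−2,−4,2)`. -/
def Amat : Matrix (Fin 3) (Fin 3) ℤ := !![2, -1, -3; -3, 2, -1; -2, -4, 2]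

/-- The simple root `α_j = a₁ⱼω₁ + a₂ⱼω₂ + a₃ⱼω₃` viewed in `F[ω₁,ω₂,ω₃]`. -/
noncomputable def cartanAlpha (A : Matrix (Fin 3) (Fin 3) ℤ) (F : Type*) [Field F]
    (j : Fin 3) : MvPolynomial (Fin 3) F :=
  ∑ i : Fin 3, (C ((A i j : ℤ) : F)) * X i

/-- The simple reflection `σ_j`. -/
noncomputable def cartanSigma (A : Matrix (Fin 3) (Fin 3) ℤ) (F : Type*) [Field F]
    (j : Fin 3) : MvPolynomial (Fin 3) F →ₐ[F] MvPolynomial (Fin 3) F :=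
  aeval (fun i => if i = j then X j - cartanAlpha A F j else X i)

/-!
Subtract from a polynomial fixed by `σ₁` and `σ₂` its value at `ω₂ = 0`. Since `a₂₁ = -3` vanishes
in `𝔽₃`, setting `ω₂ = 0` commutes with `σ₁`, so this value is again `σ₁`-invariant, and it is
fixed by `σ₂` because it is free of `ω₂`. The difference is an invariant divisible by `ω₂`, hence
by every linear form in the orbit of `ω₂`; up to sign there are six of these, pairwise coprime,
and their product is the invariant of degree six. The quotient is an invariant of smaller degree
in `ω₂`, so one descends. The same descent along `ω₁`, with the orbit `{ω₁, -(ω₁ + ω₃)}` of `ω₁`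
under `σ₁`, describes the `σ₁`-invariants free of `ω₂`.
-/

section FixedSubalgebra

variable {R A ι κ : Type*} [CommRing R] [CommRing A] [Algebra R A] {s : ι → A →ₐ[R] A}

/-- The subalgebra of elements fixed by every endomorphism of the family `s`. -/
def fixedSubalgebra (s : ι → A →ₐ[R] A) : Subalgebra R A :=
  ⨅ j, AlgHom.equalizer (s j) (AlgHom.id R A)

lemma mem_fixedSubalgebra {q : A} : q ∈ fixedSubalgebra s ↔ ∀ j, s j q = q := by
  simp [fixedSubalgebra, Algebra.mem_iInf]

lemma mem_fixedSubalgebra_pair {s₀ s₁ : A →ₐ[R] A} {q : A} :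
    q ∈ fixedSubalgebra ![s₀, s₁] ↔ s₀ q = q ∧ s₁ q = q := by
  simp [mem_fixedSubalgebra, Fin.forall_fin_two]

lemma mem_fixedSubalgebra_of_mul_mem [IsDomain A] {f h : A} (hf : f ∈ fixedSubalgebra s)
    (hf₀ : f ≠ 0) (hfh : f * h ∈ fixedSubalgebra s) : h ∈ fixedSubalgebra s := by
  simp only [mem_fixedSubalgebra, map_mul] at hf hfh ⊢
  exact fun j ↦ mul_left_cancel₀ hf₀ (by simpa only [hf j] using hfh j)

variable {φ : A →ₐ[R] A} {ℓ : κ → A} {ε : κ → R} {π : Equiv.Perm κ}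

lemma map_prod_eq_of_map_eq_smul_perm [Fintype κ] (h : ∀ k, φ (ℓ k) = ε k • ℓ (π k))
    (hε : ∏ k, ε k = 1) : φ (∏ k, ℓ k) = ∏ k, ℓ k := by
  simp only [map_prod, h, Finset.prod_smul, hε, one_smul, Equiv.prod_comp π ℓ]

lemma perm_dvd_of_map_eq_smul_perm (h : ∀ k, φ (ℓ k) = ε k • ℓ (π k)) {r : A} (hr : φ r = r)
    {k : κ} (hk : ℓ k ∣ r) : ℓ (π k) ∣ r :=
  calc ℓ (π k) ∣ ε k • ℓ (π k) := dvd_smul_of_dvd _ dvd_rfl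
    _ = φ (ℓ k) := (h k).symm
    _ ∣ φ r := map_dvd φ hk
    _ = r := hr

end FixedSubalgebra

section SetZero

variable {R σ : Type*} [CommRing R]

lemma map_mem_of_map_X_mem {A : Type*} [CommRing A] [Algebra R A] {S : Subalgebra R A}
    {φ : MvPolynomial σ R →ₐ[R] A} (h : ∀ i, φ (X i) ∈ S) (q : MvPolynomial σ R) : φ q ∈ S := by
  have hle : Algebra.adjoin R (Set.range X) ≤ S.comap φ :=
    Algebra.adjoin_le (Set.range_subset_iff.2 h)
  rw [adjoin_range_X] at hle
  exact hle Algebra.mem_top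

lemma dvd_map_sub_map {A : Type*} [CommRing A] [Algebra R A] {φ ψ : MvPolynomial σ R →ₐ[R] A}
    {d : A} (h : ∀ i, d ∣ φ (X i) - ψ (X i)) (q : MvPolynomial σ R) : d ∣ φ q - ψ q := by
  simp only [← Ideal.mem_span_singleton, ← Ideal.Quotient.eq] at h ⊢
  have hcomp : (Ideal.Quotient.mkₐ R (Ideal.span {d})).comp φ =
      (Ideal.Quotient.mkₐ R (Ideal.span {d})).comp ψ := algHom_ext h
  exact DFunLike.congr_fun hcomp q

variable [DecidableEq σ]

/-- The substitution `X i ↦ 0`, with values in the same polynomial ring. -/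
noncomputable def setZero (i : σ) : MvPolynomial σ R →ₐ[R] MvPolynomial σ R :=
  aeval (Function.update X i 0)

@[simp]
lemma setZero_X_self (i : σ) : setZero i (X i : MvPolynomial σ R) = 0 := by
  simp [setZero]

@[simp]
lemma setZero_X_of_ne {i j : σ} (h : j ≠ i) : setZero i (X j : MvPolynomial σ R) = X j := by
  simp [setZero, h]

lemma setZero_setZero (i : σ) (q : MvPolynomial σ R) :
    setZero i (setZero i q) = setZero i q := by
  refine DFunLike.congr_fun (algHom_ext (f := (setZero i).comp (setZero i)) fun j ↦ ?_) q
  obtain rfl | hj := eq_or_ne j i <;> simp [*]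

lemma X_dvd_sub_setZero (i : σ) (q : MvPolynomial σ R) : X i ∣ q - setZero i q := by
  refine dvd_map_sub_map (φ := AlgHom.id R _) (fun j ↦ ?_) q
  obtain rfl | hj := eq_or_ne j i <;> simp [*]

lemma degreeOf_setZero (i : σ) (q : MvPolynomial σ R) : degreeOf i (setZero i q) = 0 := by
  have hsupp : setZero i q ∈ supported R {i}ᶜ := by
    refine map_mem_of_map_X_mem (fun j ↦ ?_) q
    obtain rfl | hj := eq_or_ne j i
    · simp
    · rw [setZero_X_of_ne hj]
      exact Algebra.subset_adjoin ⟨j, hj, rfl⟩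
  have hvars : i ∉ (setZero i q).vars := fun hi ↦ mem_supported.1 hsupp hi rfl
  rwa [vars_def, Multiset.mem_toFinset, ← Multiset.count_eq_zero, ← degreeOf_def] at hvars

lemma degreeOf_lt_of_sub_setZero_eq_mul [IsDomain R] {i : σ} {f h q : MvPolynomial σ R}
    (hX : X i ∣ f) (hfh : f * h ≠ 0) (hq : q - setZero i q = f * h) :
    degreeOf i h < degreeOf i q := by
  obtain ⟨g, rfl⟩ := hX
  obtain ⟨hg, hh⟩ := mul_ne_zero_iff.1 (mul_assoc (X i) g h ▸ hfh) |>.2 |> mul_ne_zero_iff.1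
  calc degreeOf i h < degreeOf i (X i * g * h) := by
        rw [mul_assoc, degreeOf_mul_eq (X_ne_zero i) (mul_ne_zero hg hh), degreeOf_mul_eq hg hh,
          degreeOf_X_self]
        omega
    _ = degreeOf i (q - setZero i q) := by rw [hq]
    _ ≤ max (degreeOf i q) (degreeOf i (setZero i q)) := degreeOf_sub_le i _ _
    _ = degreeOf i q := by simp [degreeOf_setZero]

theorem fixedSubalgebra_eq_adjoin_insert [IsDomain R] {ι : Type*}
    {s : ι → MvPolynomial σ R →ₐ[R] MvPolynomial σ R} {i : σ} {f : MvPolynomial σ R}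
    {G : Set (MvPolynomial σ R)} (hf : f ∈ fixedSubalgebra s) (hf₀ : f ≠ 0) (hX : X i ∣ f)
    (hG : Algebra.adjoin R G ≤ fixedSubalgebra s)
    (hzero : ∀ q ∈ fixedSubalgebra s, setZero i q ∈ Algebra.adjoin R G)
    (hdvd : ∀ r ∈ fixedSubalgebra s, X i ∣ r → f ∣ r) :
    fixedSubalgebra s = Algebra.adjoin R (insert f G) := by
  refine le_antisymm (fun q hq ↦ ?_) (Algebra.adjoin_le (Set.insert_subset hf
    (Algebra.subset_adjoin.trans hG)))
  induction hn : degreeOf i q using Nat.strong_induction_on generalizing q with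
  | _ n ih =>
    have hq₀ := hzero q hq
    obtain ⟨h, hh⟩ := hdvd _ (sub_mem hq (hG hq₀)) (X_dvd_sub_setZero i q)
    have hfh : f * h ∈ fixedSubalgebra s := hh ▸ sub_mem hq (hG hq₀)
    rw [← sub_add_cancel q (setZero i q), hh]
    refine add_mem ?_ (Algebra.adjoin_mono (Set.subset_insert f G) hq₀)
    by_cases hfh₀ : f * h = 0
    · exact hfh₀ ▸ zero_mem _
    · exact mul_mem (Algebra.subset_adjoin (Set.mem_insert f G))
        (ih _ (hn ▸ degreeOf_lt_of_sub_setZero_eq_mul hX hfh₀ hh) h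
          (mem_fixedSubalgebra_of_mul_mem hf hf₀ hfh) rfl)

end SetZero

section LinearForm

variable {σ : Type*} [Fintype σ]

/-- The linear form `∑ i, v i • X i` with coefficient vector `v`. -/
noncomputable def linearForm {R : Type*} [CommRing R] : (σ → R) →ₗ[R] MvPolynomial σ R :=
  Fintype.linearCombination R X

lemma linearForm_apply {R : Type*} [CommRing R] (v : σ → R) :
    linearForm v = ∑ i, v i • (X i : MvPolynomial σ R) := rfl

lemma linearForm_injective {R : Type*} [CommRing R] :
    Function.Injective (linearForm : (σ → R) →ₗ[R] MvPolynomial σ R) :=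
  (linearIndependent_X σ R).fintypeLinearCombination_injective

lemma setZero_linearForm [DecidableEq σ] {R : Type*} [CommRing R] {i : σ} {v : σ → R}
    (h : v i = 0) : setZero i (linearForm v) = linearForm v := by
  simp only [linearForm_apply, map_sum, map_smul]
  refine Finset.sum_congr rfl fun j _ ↦ ?_
  obtain rfl | hj := eq_or_ne j i <;> simp [*]

variable {K : Type*} [Field K] {v w : σ → K}

lemma linearForm_ne_zero (hv : v ≠ 0) : linearForm v ≠ 0 :=
  (map_ne_zero_iff _ linearForm_injective).2 hv

lemma totalDegree_linearForm (hv : v ≠ 0) : (linearForm v).totalDegree = 1 := by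
  have hhom : linearForm v ∈ homogeneousSubmodule σ K 1 :=
    sum_mem fun i _ ↦ Submodule.smul_mem _ _ (isHomogeneous_X K i)
  exact IsHomogeneous.totalDegree hhom (linearForm_ne_zero hv)

lemma irreducible_linearForm (hv : v ≠ 0) : Irreducible (linearForm v) := by
  refine irreducible_of_totalDegree_eq_one (totalDegree_linearForm hv) fun c hc ↦ ?_
  rw [isUnit_iff_ne_zero]
  rintro rfl
  exact linearForm_ne_zero hv (MvPolynomial.ext _ _ fun m ↦ zero_dvd_iff.1 (hc m))

lemma exists_smul_eq_of_linearForm_dvd (h : linearForm v ∣ linearForm w) :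
    ∃ c : K, c • v = w := by
  obtain ⟨e, he⟩ := h
  by_cases hw : w = 0
  · exact ⟨0, by simp [hw]⟩
  obtain ⟨hv, he₀⟩ := mul_ne_zero_iff.1 (he ▸ linearForm_ne_zero hw)
  have hdeg := congrArg totalDegree he
  rw [totalDegree_mul_of_isDomain hv he₀, totalDegree_linearForm hw,
    totalDegree_linearForm (ne_zero_of_map hv)] at hdeg
  have he_const : e = C (coeff 0 e) := totalDegree_eq_zero_iff_eq_C.1 (by omega)
  refine ⟨coeff 0 e, linearForm_injective ?_⟩
  rw [map_smul, he, ← C_mul', ← he_const, mul_comm]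

lemma isRelPrime_linearForm (hvw : LinearIndependent K ![v, w]) :
    IsRelPrime (linearForm v) (linearForm w) := by
  have hv : v ≠ 0 := hvw.ne_zero 0
  rw [(irreducible_linearForm hv).isRelPrime_iff_not_dvd]
  exact fun h ↦ (exists_smul_eq_of_linearForm_dvd h).elim
    ((LinearIndependent.pair_iff' hv).1 hvw)

lemma prod_linearForm_dvd {κ : Type*} [Fintype κ] {v : κ → σ → K}
    (hv : Pairwise fun k l ↦ LinearIndependent K ![v k, v l]) {r : MvPolynomial σ K}
    (h : ∀ k, linearForm (v k) ∣ r) : ∏ k, linearForm (v k) ∣ r :=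
  Fintype.prod_dvd_of_isRelPrime (fun _ _ hkl ↦ isRelPrime_linearForm (hv hkl)) h

end LinearForm

section CartanSigma

variable (A : Matrix (Fin 3) (Fin 3) ℤ) (F : Type*) [Field F] (j : Fin 3)

lemma cartanAlpha_eq_linearForm :
    cartanAlpha A F j = linearForm fun i ↦ (A i j : F) := by
  simp only [cartanAlpha, linearForm_apply, C_mul']

@[simp]
lemma cartanSigma_X_self : cartanSigma A F j (X j) = X j - cartanAlpha A F j := by
  simp [cartanSigma]

variable {j} in
@[simp]
lemma cartanSigma_X_of_ne {i : Fin 3} (h : i ≠ j) : cartanSigma A F j (X i) = X i := by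
  simp [cartanSigma, h]

lemma cartanSigma_linearForm (v : Fin 3 → F) :
    cartanSigma A F j (linearForm v) = linearForm (v - v j • fun i ↦ (A i j : F)) := by
  have hX (i : Fin 3) :
      cartanSigma A F j (X i) = X i - (if i = j then cartanAlpha A F j else 0) := by
    obtain rfl | hi := eq_or_ne i j <;> simp [*]
  rw [map_sub, map_smul, ← cartanAlpha_eq_linearForm]
  simp [linearForm_apply, hX, smul_sub]

lemma cartanSigma_setZero (q : MvPolynomial (Fin 3) F) :
    cartanSigma A F j (setZero j q) = setZero j q := by
  refine DFunLike.congr_fun (algHom_ext (f := (cartanSigma A F j).comp (setZero j)) fun i ↦ ?_) q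
  obtain rfl | hi := eq_or_ne i j <;> simp [*]

variable {A F j} in
lemma cartanSigma_setZero_comm {i : Fin 3} (hij : i ≠ j) (h : (A i j : F) = 0)
    (q : MvPolynomial (Fin 3) F) :
    cartanSigma A F j (setZero i q) = setZero i (cartanSigma A F j q) := by
  refine DFunLike.congr_fun (algHom_ext (f := (cartanSigma A F j).comp (setZero i))
    (g := (setZero i).comp (cartanSigma A F j)) fun k ↦ ?_) q
  obtain rfl | hk := eq_or_ne k j
  · simp [hij.symm, cartanAlpha_eq_linearForm, setZero_linearForm, h]
  · obtain rfl | hki := eq_or_ne k i <;> simp [*]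

end CartanSigma

section FirstReflection

/-- The `σ₁`-orbit of `ω₁` up to sign, as coefficient vectors. -/
def orbit₁ : Fin 2 → Fin 3 → ZMod 3 := ![![1, 0, 0], ![1, 0, 1]]

lemma prod_orbit₁ : ∏ k, linearForm (orbit₁ k) = X 0 * (X 0 + X 2) := by
  simp [orbit₁, linearForm_apply, Fin.sum_univ_three]

lemma cartanSigma_orbit₁ (k : Fin 2) :
    cartanSigma Amat (ZMod 3) 0 (linearForm (orbit₁ k)) =
      (-1 : ZMod 3) • linearForm (orbit₁ (Equiv.swap 0 1 k)) := by
  rw [cartanSigma_linearForm, ← map_smul]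
  congr 1
  revert k
  decide

lemma orbit₁_ne_zero (k : Fin 2) : orbit₁ k ≠ 0 := by
  revert k
  decide

lemma orbit₁_linearIndependent :
    Pairwise fun k l ↦ LinearIndependent (ZMod 3) ![orbit₁ k, orbit₁ l] := by
  intro k l hkl
  rw [LinearIndependent.pair_iff' (orbit₁_ne_zero k)]
  revert k l
  decide

lemma prod_orbit₁_dvd {r : MvPolynomial (Fin 3) (ZMod 3)}
    (hr : cartanSigma Amat (ZMod 3) 0 r = r) (h : X 0 ∣ r) : ∏ k, linearForm (orbit₁ k) ∣ r := by
  have h₀ : linearForm (orbit₁ 0) ∣ r := by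
    simpa [orbit₁, linearForm_apply, Fin.sum_univ_three] using h
  have h₁ := perm_dvd_of_map_eq_smul_perm cartanSigma_orbit₁ hr h₀
  rw [Equiv.swap_apply_left] at h₁
  exact prod_linearForm_dvd orbit₁_linearIndependent (Fin.forall_fin_two.2 ⟨h₀, h₁⟩)

lemma setZero_zero_setZero_one_mem {R : Type*} [CommRing R] (q : MvPolynomial (Fin 3) R) :
    setZero 0 (setZero 1 q) ∈ Algebra.adjoin R {X 2} := by
  rw [← AlgHom.comp_apply]
  refine map_mem_of_map_X_mem (fun j ↦ ?_) q
  fin_cases j <;> simp [Algebra.self_mem_adjoin_singleton]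

theorem fixedSubalgebra_sigma_setZero_eq_adjoin :
    fixedSubalgebra ![cartanSigma Amat (ZMod 3) 0, setZero 1] =
      Algebra.adjoin (ZMod 3) {X 2, X 0 * (X 0 + X 2)} := by
  rw [Set.pair_comm, ← prod_orbit₁]
  refine fixedSubalgebra_eq_adjoin_insert (i := 0) ?fixed ?ne_zero ?X_dvd ?base ?setZero ?dvd
  case fixed =>
    exact mem_fixedSubalgebra_pair.2
      ⟨map_prod_eq_of_map_eq_smul_perm cartanSigma_orbit₁ (by decide),
        by rw [prod_orbit₁]; simp⟩
  case ne_zero => exact Finset.prod_ne_zero_iff.2 fun k _ ↦ linearForm_ne_zero (orbit₁_ne_zero k)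
  case X_dvd => exact prod_orbit₁ ▸ dvd_mul_right _ _
  case base => exact Algebra.adjoin_le (by simp [mem_fixedSubalgebra_pair])
  case setZero =>
    exact fun q hq ↦ (mem_fixedSubalgebra_pair.1 hq).2 ▸ setZero_zero_setZero_one_mem q
  case dvd => exact fun r hr ↦ prod_orbit₁_dvd (mem_fixedSubalgebra_pair.1 hr).1

end FirstReflection

section BothReflections

/-- The orbit of `ω₂` under the group generated by `σ₁` and `σ₂`, up to sign, as coefficient
vectors. -/
def orbit₂ : Fin 6 → Fin 3 → ZMod 3 :=
  ![![0, 1, 0], ![1, 2, 1], ![1, 1, 0], ![1, 1, 2], ![2, 1, 1], ![0, 1, 1]]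

/-- The permutations of `orbit₂` induced by `σ₁` and `σ₂`. -/
def orbit₂Perm : Fin 2 → Equiv.Perm (Fin 6) :=
  ![Equiv.swap 1 2 * Equiv.swap 3 4, Equiv.swap 0 1 * Equiv.swap 2 3 * Equiv.swap 4 5]

/-- The signs with which `σ₁` and `σ₂` permute `orbit₂`. -/
def orbit₂Sign : Fin 2 → Fin 6 → ZMod 3 :=
  ![![1, -1, -1, 1, 1, 1], ![1, 1, -1, -1, -1, -1]]

lemma prod_orbit₂ :
    ∏ k, linearForm (orbit₂ k) =
      X 1 * (X 0 + C 2 * X 1 + X 2) * (X 0 + X 1) * (X 0 + X 1 + C 2 * X 2) *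
        (C 2 * X 0 + X 1 + X 2) * (X 1 + X 2) := by
  simp [orbit₂, linearForm_apply, Fin.prod_univ_six, Fin.sum_univ_three, smul_eq_C_mul]

lemma cartanSigma_orbit₂ (j : Fin 2) (k : Fin 6) :
    cartanSigma Amat (ZMod 3) j.castSucc (linearForm (orbit₂ k)) =
      orbit₂Sign j k • linearForm (orbit₂ (orbit₂Perm j k)) := by
  rw [cartanSigma_linearForm, ← map_smul]
  congr 1
  revert j k
  decide

lemma orbit₂_ne_zero (k : Fin 6) : orbit₂ k ≠ 0 := by
  revert k
  decide

lemma orbit₂_linearIndependent :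
    Pairwise fun k l ↦ LinearIndependent (ZMod 3) ![orbit₂ k, orbit₂ l] := by
  intro k l hkl
  rw [LinearIndependent.pair_iff' (orbit₂_ne_zero k)]
  revert k l
  decide

lemma prod_orbit₂_dvd {r : MvPolynomial (Fin 3) (ZMod 3)}
    (hr : ∀ j : Fin 2, cartanSigma Amat (ZMod 3) j.castSucc r = r) (h : X 1 ∣ r) :
    ∏ k, linearForm (orbit₂ k) ∣ r := by
  refine prod_linearForm_dvd orbit₂_linearIndependent fun k ↦ ?_
  induction k using Fin.induction with
  | zero => simpa [orbit₂, linearForm_apply, Fin.sum_univ_three] using h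
  | succ k ih =>
    obtain ⟨j, hj⟩ : ∃ j, orbit₂Perm j k.castSucc = k.succ := by
      clear ih
      revert k
      decide
    exact hj ▸ perm_dvd_of_map_eq_smul_perm (cartanSigma_orbit₂ j) (hr j) ih

lemma setZero_mem_fixedSubalgebra_sigma_setZero {q : MvPolynomial (Fin 3) (ZMod 3)}
    (hq : cartanSigma Amat (ZMod 3) 0 q = q) :
    setZero 1 q ∈ fixedSubalgebra ![cartanSigma Amat (ZMod 3) 0, setZero 1] := by
  have hA₂₁ : (Amat 1 0 : ZMod 3) = 0 := by decide
  refine mem_fixedSubalgebra_pair.2 ⟨?_, setZero_setZero 1 q⟩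
  rw [cartanSigma_setZero_comm (by decide) hA₂₁, hq]

lemma fixedSubalgebra_sigma_setZero_le {A : Matrix (Fin 3) (Fin 3) ℤ} {F : Type*} [Field F]
    {i j : Fin 3} : fixedSubalgebra ![cartanSigma A F i, setZero j] ≤
      fixedSubalgebra ![cartanSigma A F i, cartanSigma A F j] := by
  intro q hq
  rw [mem_fixedSubalgebra_pair] at hq ⊢
  exact ⟨hq.1, by rw [← hq.2, cartanSigma_setZero]⟩

theorem fixedSubalgebra_sigma_sigma_eq_adjoin :
    fixedSubalgebra ![cartanSigma Amat (ZMod 3) 0, cartanSigma Amat (ZMod 3) 1] =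
      Algebra.adjoin (ZMod 3) {X 2, X 0 * (X 0 + X 2), ∏ k, linearForm (orbit₂ k)} := by
  have hbase := fixedSubalgebra_sigma_setZero_eq_adjoin
  have hfixed (j : Fin 2) :=
    map_prod_eq_of_map_eq_smul_perm (cartanSigma_orbit₂ j) (by revert j; decide)
  rw [Set.pair_comm _ (∏ k, _), Set.insert_comm]
  refine fixedSubalgebra_eq_adjoin_insert (i := 1) ?fixed ?ne_zero ?X_dvd ?base ?setZero ?dvd
  case fixed => exact mem_fixedSubalgebra_pair.2 ⟨hfixed 0, hfixed 1⟩
  case ne_zero => exact Finset.prod_ne_zero_iff.2 fun k _ ↦ linearForm_ne_zero (orbit₂_ne_zero k)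
  case X_dvd =>
    rw [prod_orbit₂]
    simp only [mul_assoc, dvd_mul_right]
  case base => exact hbase ▸ fixedSubalgebra_sigma_setZero_le
  case setZero =>
    exact fun q hq ↦
      hbase ▸ setZero_mem_fixedSubalgebra_sigma_setZero (mem_fixedSubalgebra_pair.1 hq).1
  case dvd =>
    exact fun r hr ↦ prod_orbit₂_dvd (Fin.forall_fin_two.2 (mem_fixedSubalgebra_pair.1 hr))

end BothReflections

/-- For the stated Cartan matrix `A`, the subalgebra of `𝔽₃[ω₁,ω₂,ω₃]` of
polynomials fixed by both `σ₁` and `σ₂` is generated by `ω₃`, `ω₁(ω₁+ω₃)` and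
`ω₂(ω₁+2ω₂+ω₃)(ω₁+ω₂)(ω₁+ω₂+2ω₃)(2ω₁+ω₂+ω₃)(ω₂+ω₃)`. -/
theorem mod3_P12_eq_adjoin :
    {q : MvPolynomial (Fin 3) (ZMod 3) |
        cartanSigma Amat (ZMod 3) 0 q = q ∧ cartanSigma Amat (ZMod 3) 1 q = q} =
      ↑(Algebra.adjoin (ZMod 3)
        ({X 2, X 0 * (X 0 + X 2),
          X 1 * (X 0 + C 2 * X 1 + X 2) * (X 0 + X 1) * (X 0 + X 1 + C 2 * X 2) *
            (C 2 * X 0 + X 1 + X 2) * (X 1 + X 2)} :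
          Set (MvPolynomial (Fin 3) (ZMod 3)))) := by
  rw [← prod_orbit₂, ← fixedSubalgebra_sigma_sigma_eq_adjoin]
  ext q
  exact mem_fixedSubalgebra_pair.symm
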